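/- arXiv:2306.17272 — 3 statements merged into one kernel-verified Lean document; each statement's English description precedes it below -/
import Mathlib

section
/- Let G be a graph containing no cycle of length 4, 5, or 6 (as a subgraph), and let xy be an edge of G such that N(x) ∩ N(y) = ∅, d(x) ≥ 2 and d(y) ≥ 2. Then the following are equivalent: (1) neither x nor y is a shedding vertex of G; (2) xy is a relating edge of G. -/
open SimpleGraph

/-- A set of vertices is independent if its elements are pairwise nonadjacent. -/
def IsIndep {V : Type*} (G : SimpleGraph V) (S : Set V) : Prop :=
  S.Pairwise fun a b => ¬ G.Adj a b

/-- The closed neighborhood `N[S]` of a set of vertices. -/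
def closedNbhd {V : Type*} (G : SimpleGraph V) (S : Set V) : Set V :=
  S ∪ {x | ∃ s ∈ S, G.Adj s x}

/-- The open neighborhood `N(S) = N[S] \ S` of a set of vertices. -/
def openNbhd {V : Type*} (G : SimpleGraph V) (S : Set V) : Set V :=
  closedNbhd G S \ S

/-- `S` dominates `T` if `T ⊆ N[S]`. -/
def Dominates {V : Type*} (G : SimpleGraph V) (S T : Set V) : Prop :=
  T ⊆ closedNbhd G S

/-- `N₂(v)`: the set of vertices at distance exactly 2 from `v`. -/
def N2 {V : Type*} (G : SimpleGraph V) (v : V) : Set V :=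
  {u | u ≠ v ∧ ¬ G.Adj v u ∧ ∃ w, G.Adj v w ∧ G.Adj w u}

/-- A maximal independent set of the subgraph of `G` induced by `A`. -/
def IsMaximalIndepOn {V : Type*} (G : SimpleGraph V) (A S : Set V) : Prop :=
  S ⊆ A ∧ IsIndep G S ∧ ∀ T, T ⊆ A → IsIndep G T → S ⊆ T → S = T

/-- A maximal independent set of `G`. -/
def IsMaximalIndep {V : Type*} (G : SimpleGraph V) (S : Set V) : Prop :=
  IsMaximalIndepOn G Set.univ S

/-- A maximum independent set of the subgraph of `G` induced by `A`. -/
def IsMaxIndepOn {V : Type*} (G : SimpleGraph V) (A S : Set V) : Prop :=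
  S ⊆ A ∧ IsIndep G S ∧ ∀ T, T ⊆ A → IsIndep G T → T.ncard ≤ S.ncard

/-- A maximum independent set of `G`. -/
def IsMaxIndep {V : Type*} (G : SimpleGraph V) (S : Set V) : Prop :=
  IsMaxIndepOn G Set.univ S

/-- The independence number of the subgraph of `G` induced by `A`. -/
noncomputable def alphaOn {V : Type*} (G : SimpleGraph V) (A : Set V) : ℕ :=
  sSup {n | ∃ S, S ⊆ A ∧ IsIndep G S ∧ S.ncard = n}

/-- The independence number `α(G)`. -/
noncomputable def alpha {V : Type*} (G : SimpleGraph V) : ℕ :=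
  alphaOn G Set.univ

/-- The subgraph of `G` induced by `A` is well-covered. -/
def WellCoveredOn {V : Type*} (G : SimpleGraph V) (A : Set V) : Prop :=
  ∀ S, IsMaximalIndepOn G A S → IsMaxIndepOn G A S

/-- `G` is well-covered: every maximal independent set is maximum. -/
def WellCovered {V : Type*} (G : SimpleGraph V) : Prop :=
  WellCoveredOn G Set.univ

/-- The subgraph of `G` induced by `A` is in the class `W₂`. -/
def W2On {V : Type*} (G : SimpleGraph V) (A : Set V) : Prop :=
  ∀ S₁ S₂ : Set V, S₁ ⊆ A → S₂ ⊆ A → IsIndep G S₁ → IsIndep G S₂ → Disjoint S₁ S₂ →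
    ∃ T₁ T₂ : Set V, S₁ ⊆ T₁ ∧ S₂ ⊆ T₂ ∧ IsMaxIndepOn G A T₁ ∧ IsMaxIndepOn G A T₂ ∧
      Disjoint T₁ T₂

/-- `G` belongs to the class `W₂`: every two pairwise disjoint independent sets are
included in two pairwise disjoint maximum independent sets. -/
def W2 {V : Type*} (G : SimpleGraph V) : Prop :=
  W2On G Set.univ

/-- `v` is a shedding vertex: for every independent set `S ⊆ V(G) \ N[v]` there exists
`u ∈ N(v)` such that `S ∪ {u}` is independent. -/
def Shedding {V : Type*} (G : SimpleGraph V) (v : V) : Prop :=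
  ∀ S : Set V, Disjoint S (closedNbhd G {v}) → IsIndep G S →
    ∃ u ∈ G.neighborSet v, IsIndep G (insert u S)

/-- The edge `xy` is relating: there is an independent set `S ⊆ V(G) \ N[{x,y}]` such
that both `S ∪ {x}` and `S ∪ {y}` are maximal independent sets of `G`. -/
def Relating {V : Type*} (G : SimpleGraph V) (x y : V) : Prop :=
  ∃ S : Set V, IsIndep G S ∧ Disjoint S (closedNbhd G {x, y}) ∧
    IsMaximalIndep G (insert x S) ∧ IsMaximalIndep G (insert y S)

/-- `G` contains no cycle of length `k` (as a subgraph). -/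
def CycleFree {V : Type*} (G : SimpleGraph V) (k : ℕ) : Prop :=
  ∀ (u : V) (w : G.Walk u u), w.IsCycle → w.length ≠ k

/-- A vertex is simplicial if its closed neighborhood is a clique. -/
def Simplicial {V : Type*} (G : SimpleGraph V) (v : V) : Prop :=
  G.IsClique (closedNbhd G {v})

/-!
Write `N[x] ∆ N[y]` for the vertices seen by exactly one end of the edge `xy`; as `x` and `y` have
no common neighbour, these are the remaining neighbours of `x` and the remaining neighbours of `y`.
An independent set off `N[{x, y}]` extends to one that dominates everything off `N[{x, y}]`, so
`xy` is relating iff some independent set off `N[{x, y}]` dominates `N[x] ∆ N[y]`. Likewise, `x` is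
not shedding iff some independent set off `N[x]` dominates `N(x)`.

If `A` and `B` witness that `x` and `y` are not shedding, then by the absence of 4-cycles
`A ∩ N₂(x) \ N[y]` still dominates `N(x) \ {y}`, and symmetrically for `B`. By the absence of
6-cycles no edge joins these two sets, so their union witnesses that `xy` is relating.

Conversely, if `S` witnesses that `xy` is relating and `y' ≠ x` is a neighbour of `y`, put `y'` into
`S` and remove its neighbours from `S`. This dominates `y`, and by the absence of 5-cycles it still
dominates `N(x) \ {y}`, so `x` is not shedding.
-/

section

variable {V : Type*} {G : SimpleGraph V} {A B S T : Set V} {u v x y : V}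

theorem IsIndep.mono (hT : IsIndep G T) (hST : S ⊆ T) : IsIndep G S :=
  Set.Pairwise.mono hST hT

theorem IsIndep.not_adj (hS : IsIndep G S) (hu : u ∈ S) (hv : v ∈ S) : ¬ G.Adj u v :=
  fun huv => hS hu hv huv.ne huv

theorem isIndep_union_iff :
    IsIndep G (S ∪ T) ↔ IsIndep G S ∧ IsIndep G T ∧ ∀ s ∈ S, ∀ t ∈ T, ¬ G.Adj s t := by
  unfold IsIndep
  grind [Set.pairwise_union, G.adj_comm, G.ne_of_adj]

theorem isIndep_insert_iff :
    IsIndep G (insert v S) ↔ IsIndep G S ∧ ∀ s ∈ S, ¬ G.Adj v s := by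
  rw [Set.insert_eq, isIndep_union_iff]
  simp [IsIndep]

theorem mem_closedNbhd_singleton : u ∈ closedNbhd G {v} ↔ u = v ∨ G.Adj v u := by
  simp [closedNbhd]

theorem disjoint_closedNbhd_singleton :
    Disjoint S (closedNbhd G {v}) ↔ ∀ s ∈ S, s ≠ v ∧ ¬ G.Adj v s := by
  simp only [Set.disjoint_left, mem_closedNbhd_singleton, not_or, ne_eq]

theorem closedNbhd_insert :
    closedNbhd G (insert v S) = closedNbhd G {v} ∪ closedNbhd G S := by
  ext u
  simp only [closedNbhd, Set.mem_union, Set.mem_insert_iff, Set.mem_singleton_iff,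
    Set.mem_ofPred_eq, exists_eq_or_imp, exists_eq_left]
  tauto

theorem closedNbhd_mono (hST : S ⊆ T) : closedNbhd G S ⊆ closedNbhd G T :=
  Set.union_subset_union hST fun _ ⟨s, hs, hadj⟩ => ⟨s, hST hs, hadj⟩

theorem symmDiff_closedNbhd_of_adj (hxy : G.Adj x y)
    (hdisj : Disjoint (G.neighborSet x) (G.neighborSet y)) :
    symmDiff (closedNbhd G {x}) (closedNbhd G {y}) =
      G.neighborSet x \ {y} ∪ G.neighborSet y \ {x} := by
  have hcommon : ∀ v, G.Adj x v → ¬ G.Adj y v := fun _ hx hy => Set.disjoint_left.1 hdisj hx hy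
  ext v
  simp only [Set.mem_symmDiff, mem_closedNbhd_singleton, Set.mem_union, Set.mem_sdiff,
    mem_neighborSet, Set.mem_singleton_iff]
  grind [G.adj_comm, G.ne_of_adj]

theorem Dominates.mono_left (hS : Dominates G S A) (hST : S ⊆ T) : Dominates G T A :=
  hS.trans (closedNbhd_mono hST)

theorem Dominates.union (hS : Dominates G S A) (hT : Dominates G T B) :
    Dominates G (S ∪ T) (A ∪ B) :=
  Set.union_subset (hS.mono_left Set.subset_union_left) (hT.mono_left Set.subset_union_right)

theorem Dominates.exists_adj (hS : Dominates G S A) (hvA : v ∈ A) (hvS : v ∉ S) :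
    ∃ s ∈ S, G.Adj s v :=
  (hS hvA).resolve_left hvS

theorem isMaximalIndepOn_iff_dominates :
    IsMaximalIndepOn G A S ↔ S ⊆ A ∧ IsIndep G S ∧ Dominates G S A := by
  refine and_congr_right fun hSA => and_congr_right fun hS => ⟨fun hmax v hvA => ?_,
    fun hdom T hTA hT hST => hST.antisymm fun v hv => ?_⟩
  · by_contra hv
    simp only [closedNbhd, Set.mem_union, Set.mem_ofPred_eq, not_or, not_exists, not_and] at hv
    have hins : IsIndep G (insert v S) :=
      isIndep_insert_iff.2 ⟨hS, fun s hs hadj => hv.2 s hs hadj.symm⟩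
    exact hv.1 (hmax _ (Set.insert_subset hvA hSA) hins (Set.subset_insert v S) ▸
      Set.mem_insert v S)
  · by_contra hvS
    obtain ⟨s, hs, hadj⟩ := hdom.exists_adj (hTA hv) hvS
    exact hT.not_adj (hST hs) hv hadj

theorem IsIndep.exists_isMaximalIndepOn_superset (hS : IsIndep G S) (hSA : S ⊆ A) :
    ∃ T, S ⊆ T ∧ IsMaximalIndepOn G A T := by
  obtain ⟨T, hST, hT⟩ := zorn_subset_nonempty {T | T ⊆ A ∧ IsIndep G T}
    (fun c hc hchain _ => ⟨⋃₀ c, ⟨Set.sUnion_subset fun T hT => (hc hT).1,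
      hchain.pairwise_sUnion.2 fun T hT => (hc hT).2⟩, fun T hT => Set.subset_sUnion_of_mem hT⟩)
    S ⟨hSA, hS⟩
  exact ⟨T, hST, hT.prop.1, hT.prop.2, fun T' hT'A hT' hTT' => hT.eq_of_subset ⟨hT'A, hT'⟩ hTT'⟩

theorem not_shedding_iff_exists_dominates :
    ¬ Shedding G v ↔ ∃ S, Disjoint S (closedNbhd G {v}) ∧ IsIndep G S ∧
      Dominates G S (G.neighborSet v) := by
  simp only [Shedding, not_forall, exists_prop]
  refine exists_congr fun S => and_congr_right fun hdisj => and_congr_right fun hS => ?_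
  simp only [isIndep_insert_iff, hS, true_and, not_exists, not_and, not_forall, not_not]
  refine forall₂_congr fun u hu => ?_
  have huS : u ∉ S := fun h => (disjoint_closedNbhd_singleton.1 hdisj u h).2 hu
  simp [closedNbhd, huS, G.adj_comm u]

theorem isMaximalIndep_insert_iff_dominates (hS : IsIndep G S)
    (hdisj : Disjoint S (closedNbhd G {v})) :
    IsMaximalIndep G (insert v S) ↔ Dominates G S (closedNbhd G {v})ᶜ := by
  have hins : IsIndep G (insert v S) := isIndep_insert_iff.2
    ⟨hS, fun s hs => (disjoint_closedNbhd_singleton.1 hdisj s hs).2⟩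
  simp only [IsMaximalIndep, isMaximalIndepOn_iff_dominates, Set.subset_univ, hins, true_and,
    Dominates, closedNbhd_insert, ← Set.sdiff_subset_iff, Set.compl_eq_univ_sdiff]

theorem Relating.symm (h : Relating G x y) : Relating G y x := by
  obtain ⟨S, hS, hdisj, hx, hy⟩ := h
  exact ⟨S, hS, Set.pair_comm x y ▸ hdisj, hy, hx⟩

theorem relating_iff_exists_dominates_symmDiff :
    Relating G x y ↔ ∃ S, IsIndep G S ∧ Disjoint S (closedNbhd G {x, y}) ∧
      Dominates G S (symmDiff (closedNbhd G {x}) (closedNbhd G {y})) := by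
  simp only [Relating, closedNbhd_insert (v := x) (S := {y}), Set.disjoint_union_right]
  constructor
  · rintro ⟨S, hS, ⟨hSx, hSy⟩, hx, hy⟩
    rw [isMaximalIndep_insert_iff_dominates hS hSx] at hx
    rw [isMaximalIndep_insert_iff_dominates hS hSy] at hy
    exact ⟨S, hS, ⟨hSx, hSy⟩, Set.union_subset (fun v hv => hy hv.2) (fun v hv => hx hv.2)⟩
  · rintro ⟨S, hS, hdisj, hdom⟩
    obtain ⟨T, hST, hT⟩ := hS.exists_isMaximalIndepOn_superset
      (Set.subset_compl_iff_disjoint_right.2 (Set.disjoint_union_right.2 hdisj))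
    obtain ⟨hTsub, hTindep, hTdom⟩ := isMaximalIndepOn_iff_dominates.1 hT
    have hTxy := Set.disjoint_union_right.1 (Set.subset_compl_iff_disjoint_right.1 hTsub)
    refine ⟨T, hTindep, hTxy,
      (isMaximalIndep_insert_iff_dominates hTindep hTxy.1).2 fun v hvx => ?_,
      (isMaximalIndep_insert_iff_dominates hTindep hTxy.2).2 fun v hvy => ?_⟩
    · by_cases hvy : v ∈ closedNbhd G {y}
      · exact hdom.mono_left hST (.inr ⟨hvy, hvx⟩)
      · exact hTdom (not_or.2 ⟨hvx, hvy⟩)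
    · by_cases hvx : v ∈ closedNbhd G {x}
      · exact hdom.mono_left hST (.inl ⟨hvx, hvy⟩)
      · exact hTdom (not_or.2 ⟨hvx, hvy⟩)

theorem CycleFree.not_adj_getLast_head {l : List V} (h : CycleFree G l.length)
    (hlen : 3 ≤ l.length) (hchain : l.IsChain G.Adj) (hnodup : l.Nodup) (hl : l ≠ []) :
    ¬ G.Adj (l.getLast hl) (l.head hl) := by
  intro hadj
  let p : G.Walk (l.head hl) (l.getLast hl) := .ofSupport l hl hchain
  have hp : p.IsPath := by rwa [Walk.isPath_def, Walk.support_ofSupport]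
  have hlength : (Walk.cons hadj p).length = l.length := by
    rw [Walk.length_cons, Walk.length_ofSupport]
    lia
  refine h _ (.cons hadj p) (Walk.isCycle_iff_isPath_tail_and_le_length.2 ⟨?_, ?_⟩) hlength
  · simpa using hp
  · exact hlength ▸ hlen

theorem CycleFree.dominates_inter_N2 (h4 : CycleFree G 4) (hxy : G.Adj x y)
    (hdisj : Disjoint S (closedNbhd G {x})) (hdom : Dominates G S (G.neighborSet x)) :
    Dominates G (S ∩ (N2 G x \ closedNbhd G {y})) (G.neighborSet x \ {y}) := by
  rw [disjoint_closedNbhd_singleton] at hdisj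
  rintro v ⟨hxv : G.Adj x v, hvy : v ≠ y⟩
  obtain ⟨s, hs, hsv⟩ := hdom.exists_adj hxv fun hv => (hdisj v hv).2 hxv
  obtain ⟨hsx, hxs⟩ := hdisj s hs
  have hsy : s ≠ y := fun h => hxs (h ▸ hxy)
  have hnodup : [s, v, x, y].Nodup := by
    simp [hsv.ne, hsx, hsy, hxv.ne', hvy, hxy.ne]
  have hys : ¬ G.Adj y s := h4.not_adj_getLast_head (l := [s, v, x, y]) (by simp)
    (by simp [hsv, hxv.symm, hxy]) hnodup (List.cons_ne_nil _ _)
  refine .inr ⟨s, ⟨hs, ⟨hsx, hxs, v, hxv, hsv.symm⟩, ?_⟩, hsv⟩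
  exact mt mem_closedNbhd_singleton.1 (not_or.2 ⟨hsy, hys⟩)

theorem CycleFree.not_adj_of_mem_N2 (h6 : CycleFree G 6) (hxy : G.Adj x y)
    (hdisj : Disjoint (G.neighborSet x) (G.neighborSet y))
    (hu : u ∈ N2 G x \ closedNbhd G {y}) (hv : v ∈ N2 G y \ closedNbhd G {x}) :
    ¬ G.Adj u v := by
  obtain ⟨⟨hux, -, x', hxx', hx'u⟩, huy⟩ := hu
  obtain ⟨⟨hvy, -, y', hyy', hy'v⟩, hvx⟩ := hv
  rw [mem_closedNbhd_singleton, not_or] at huy hvx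
  intro huv
  have hx'y' : x' ≠ y' := Set.disjoint_iff_forall_ne.1 hdisj hxx' hyy'
  have hx'y : x' ≠ y := fun h => huy.2 (h ▸ hx'u)
  have hy'x : y' ≠ x := fun h => hvx.2 (h ▸ hy'v)
  have huy' : u ≠ y' := fun h => huy.2 (h ▸ hyy')
  have hvx' : v ≠ x' := fun h => hvx.2 (h ▸ hxx')
  have hnodup : [v, y', y, x, x', u].Nodup := by
    simp [hy'v.ne', hvy, hvx.1, hvx', huv.ne', hyy'.ne', hy'x, hx'y'.symm, huy'.symm, hxy.ne',
      hx'y.symm, Ne.symm huy.1, hxx'.ne, hux.symm, hx'u.ne]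
  exact h6.not_adj_getLast_head (l := [v, y', y, x, x', u]) (by simp)
    (by simp [hy'v.symm, hyy'.symm, hxy.symm, hxx', hx'u]) hnodup (List.cons_ne_nil _ _) huv

theorem CycleFree.relating_of_not_shedding (h4 : CycleFree G 4) (h6 : CycleFree G 6)
    (hxy : G.Adj x y) (hdisj : Disjoint (G.neighborSet x) (G.neighborSet y))
    (hx : ¬ Shedding G x) (hy : ¬ Shedding G y) : Relating G x y := by
  obtain ⟨A, hAx, hA, hAdom⟩ := not_shedding_iff_exists_dominates.1 hx
  obtain ⟨B, hBy, hB, hBdom⟩ := not_shedding_iff_exists_dominates.1 hy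
  refine relating_iff_exists_dominates_symmDiff.2
    ⟨A ∩ (N2 G x \ closedNbhd G {y}) ∪ B ∩ (N2 G y \ closedNbhd G {x}), ?_, ?_, ?_⟩
  · exact isIndep_union_iff.2 ⟨hA.mono Set.inter_subset_left, hB.mono Set.inter_subset_left,
      fun s hs t ht => h6.not_adj_of_mem_N2 hxy hdisj hs.2 ht.2⟩
  · rw [closedNbhd_insert, Set.disjoint_union_right, Set.disjoint_union_left,
      Set.disjoint_union_left]
    exact ⟨⟨hAx.mono_left Set.inter_subset_left, Set.disjoint_left.2 fun _ hs => hs.2.2⟩,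
      Set.disjoint_left.2 fun _ hs => hs.2.2, hBy.mono_left Set.inter_subset_left⟩
  · rw [symmDiff_closedNbhd_of_adj hxy hdisj]
    exact (h4.dominates_inter_N2 hxy hAx hAdom).union
      (h4.dominates_inter_N2 hxy.symm hBy hBdom)

theorem CycleFree.not_shedding_of_relating (h5 : CycleFree G 5) (hxy : G.Adj x y)
    (hdisj : Disjoint (G.neighborSet x) (G.neighborSet y)) (hy : (G.neighborSet y).Nontrivial)
    (h : Relating G x y) : ¬ Shedding G x := by
  obtain ⟨S, hS, hSxy, hdom⟩ := relating_iff_exists_dominates_symmDiff.1 h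
  rw [symmDiff_closedNbhd_of_adj hxy hdisj] at hdom
  obtain ⟨y', hyy' : G.Adj y y', hy'x⟩ := hy.exists_ne x
  have hxy' : ¬ G.Adj x y' := fun hadj => Set.disjoint_left.1 hdisj hadj hyy'
  rw [closedNbhd_insert, Set.disjoint_union_right, disjoint_closedNbhd_singleton,
    disjoint_closedNbhd_singleton] at hSxy
  obtain ⟨hSx, hSy⟩ := hSxy
  refine not_shedding_iff_exists_dominates.2 ⟨insert y' (S \ G.neighborSet y'), ?_, ?_, ?_⟩
  · rw [disjoint_closedNbhd_singleton, Set.forall_mem_insert]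
    exact ⟨⟨hy'x, hxy'⟩, fun s hs => hSx s hs.1⟩
  · exact isIndep_insert_iff.2 ⟨hS.mono Set.sdiff_subset, fun s hs => hs.2⟩
  · intro u (hxu : G.Adj x u)
    by_cases huy : u = y
    · exact .inr ⟨y', Set.mem_insert _ _, huy ▸ hyy'.symm⟩
    obtain ⟨s, hs, hsu⟩ := hdom.exists_adj (.inl ⟨hxu, huy⟩) fun hu => (hSx u hu).2 hxu
    have hsy' : s ≠ y' := fun h => (hSy s hs).2 (h ▸ hyy')
    have huy' : u ≠ y' := fun h => hxy' (h ▸ hxu)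
    have hnodup : [s, u, x, y, y'].Nodup := by
      simp [hsu.ne, (hSx s hs).1, (hSy s hs).1, hsy', hxu.ne', huy, huy', hxy.ne, hy'x.symm,
        hyy'.ne]
    have hy's : ¬ G.Adj y' s := h5.not_adj_getLast_head (l := [s, u, x, y, y']) (by simp)
      (by simp [hsu, hxu.symm, hxy, hyy']) hnodup (List.cons_ne_nil _ _)
    exact .inr ⟨s, Set.mem_insert_of_mem _ ⟨hs, hy's⟩, hsu⟩

theorem stmt0_general (h4 : CycleFree G 4) (h5 : CycleFree G 5) (h6 : CycleFree G 6)
    (hxy : G.Adj x y) (hdisj : Disjoint (G.neighborSet x) (G.neighborSet y))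
    (hx : (G.neighborSet x).Nontrivial) (hy : (G.neighborSet y).Nontrivial) :
    (¬ Shedding G x ∧ ¬ Shedding G y) ↔ Relating G x y :=
  ⟨fun ⟨hx, hy⟩ => h4.relating_of_not_shedding h6 hxy hdisj hx hy, fun h =>
    ⟨h5.not_shedding_of_relating hxy hdisj hy h,
      h5.not_shedding_of_relating hxy.symm hdisj.symm hx h.symm⟩⟩

end

/-- In a graph with no cycles of lengths 4, 5, 6, for an edge `xy` with
`N(x) ∩ N(y) = ∅`, `d(x) ≥ 2` and `d(y) ≥ 2`: neither `x` nor `y` is shedding iff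
`xy` is a relating edge. -/
theorem stmt0 {V : Type*} [Fintype V] (G : SimpleGraph V)
    (h4 : CycleFree G 4) (h5 : CycleFree G 5) (h6 : CycleFree G 6)
    (x y : V) (hxy : G.Adj x y)
    (hcap : G.neighborSet x ∩ G.neighborSet y = ∅)
    (hdx : 2 ≤ (G.neighborSet x).ncard) (hdy : 2 ≤ (G.neighborSet y).ncard) :
    (¬ Shedding G x ∧ ¬ Shedding G y) ↔ Relating G x y :=
  stmt0_general h4 h5 h6 hxy (Set.disjoint_iff_inter_eq_empty.2 hcap)
    (Set.one_lt_ncard_iff_nontrivial.1 hdx) (Set.one_lt_ncard_iff_nontrivial.1 hdy)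
end

section
/- Let G be a connected graph containing no cycle of length 3 and no cycle of length 5 (as subgraphs). Then G belongs to the class W2 if and only if G is isomorphic to K2. -/
open SimpleGraph

/-!
If no closed walk has length 5, then the set `N₂(v)` of vertices at distance 2 from `v` is
independent: two adjacent vertices of it would close up to such a walk through `v`. In a graph of
class `W₂` every vertex `v` is shedding, because a maximum independent set avoiding `v` must
contain a neighbor of `v`. Shedding against `S = N₂(v)` produces a neighbor `u` of `v` with no
neighbor in `N₂(v)`; in the absence of triangles, `N(u) = {v}`. The same argument at `u` gives a
vertex `w` with `N(w) = {u}`; it lies in `N(u)`, so `w = v`, and `{u, v}` is a connected component.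
-/

section Independence

variable {V : Type*} {G : SimpleGraph V}

theorem isIndep_singleton (v : V) : IsIndep G {v} :=
  Set.pairwise_singleton v _

theorem isIndep_insert {v : V} {S : Set V} (hv : v ∉ S) :
    IsIndep G (insert v S) ↔ IsIndep G S ∧ ∀ u ∈ S, ¬G.Adj v u := by
  have : Std.Symm fun a b => ¬G.Adj a b := ⟨fun _ _ h hba => h hba.symm⟩
  exact Set.pairwise_insert_of_symm_of_notMem hv

theorem isIndep_top_iff {S : Set V} : IsIndep (⊤ : SimpleGraph V) S ↔ S.Subsingleton := by
  simp [IsIndep, Set.Pairwise, Set.Subsingleton]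

theorem IsMaxIndepOn.dominates {A T : Set V} (hT : IsMaxIndepOn G A T) (hfin : T.Finite) :
    Dominates G T A := by
  obtain ⟨hTA, hindep, hmax⟩ := hT
  intro v hvA
  by_contra hv
  simp only [closedNbhd, Set.mem_union, Set.mem_ofPred_eq, not_or, not_exists, not_and] at hv
  obtain ⟨hvT, hnadj⟩ := hv
  have hinsert : IsIndep G (insert v T) :=
    (isIndep_insert hvT).2 ⟨hindep, fun u hu hvu => hnadj u hu hvu.symm⟩
  have hcard := hmax _ (Set.insert_subset hvA hTA) hinsert
  rw [Set.ncard_insert_of_notMem hvT hfin] at hcard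
  omega

theorem W2.shedding [Finite V] (h : W2 G) (v : V) : Shedding G v := by
  intro S hdisj hS
  have hvS : v ∉ S := fun hv => Set.disjoint_left.1 hdisj hv (Or.inl rfl)
  obtain ⟨T₁, T, hvT₁, hST, -, hT, hT₁T⟩ := h {v} S (Set.subset_univ _) (Set.subset_univ _)
    (isIndep_singleton v) hS (Set.disjoint_singleton_left.2 hvS)
  have hvT : v ∉ T := Set.disjoint_left.1 hT₁T (hvT₁ rfl)
  obtain ⟨u, huT, huv⟩ := (hT.dominates T.toFinite (Set.mem_univ v)).resolve_left hvT
  exact ⟨u, huv.symm, hT.2.1.mono (Set.insert_subset huT hST)⟩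

end Independence

section ShortCycles

variable {V : Type*} {G : SimpleGraph V}

theorem CycleFree.closedWalk_length_ne_three (h3 : CycleFree G 3) {a : V} (p : G.Walk a a) :
    p.length ≠ 3 := by
  intro hp
  refine h3 a p (Walk.isCycle_iff_isPath_tail_and_le_length.2 ⟨?_, hp.ge⟩) hp
  match p, hp with
  | .cons hab (.cons hbc (.cons hca .nil)), _ =>
    simp [Walk.isPath_def, hab.ne', hbc.ne, hca.ne]

theorem CycleFree.closedWalk_length_ne_five (h3 : CycleFree G 3) (h5 : CycleFree G 5) {a : V}
    (p : G.Walk a a) : p.length ≠ 5 := by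
  intro hp
  refine h5 a p (Walk.isCycle_iff_isPath_tail_and_le_length.2 ⟨?_, by omega⟩) hp
  match p, hp with
  | .cons (v := b) hab (.cons (v := c) hbc (.cons (v := d) hcd (.cons (v := e) hde
      (.cons hea .nil)))), _ =>
    -- Equality of two vertices at distance 2 along the walk would leave a closed walk of length 3.
    have htri {x y z : V} (hxy : G.Adj x y) (hyz : G.Adj y z) : ¬G.Adj z x := fun hzx =>
      h3.closedWalk_length_ne_three (.cons hxy (.cons hyz (.cons hzx .nil))) rfl
    have hbd : b ≠ d := fun h => htri hde hea (h ▸ hab)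
    have hbe : b ≠ e := fun h => htri hbc hcd (h ▸ hde)
    have hca : c ≠ a := fun h => htri hcd hde (h ▸ hea)
    have hce : c ≠ e := fun h => htri hea hab (h ▸ hbc)
    have hda : d ≠ a := fun h => htri hab hbc (h ▸ hcd)
    simp [Walk.isPath_def, hbc.ne, hbd, hbe, hab.ne', hcd.ne, hce, hca, hde.ne, hda, hea.ne]

theorem isIndep_N2 {v : V} (h : ∀ p : G.Walk v v, p.length ≠ 5) : IsIndep G (N2 G v) := by
  rintro a ⟨-, -, p, hvp, hpa⟩ b ⟨-, -, q, hvq, hqb⟩ - hab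
  exact h (.cons hvp (.cons hpa (.cons hab (.cons hqb.symm (.cons hvq.symm .nil))))) rfl

theorem Shedding.exists_neighborSet_eq_singleton {v : V} (hv : Shedding G v)
    (h3 : CycleFree G 3) (hN2 : IsIndep G (N2 G v)) : ∃ u, G.neighborSet u = {v} := by
  have hdisj : Disjoint (N2 G v) (closedNbhd G {v}) := by
    rw [Set.disjoint_left]
    rintro x ⟨hxv, hvx, -⟩ (rfl | ⟨_, rfl, hadj⟩)
    exacts [hxv rfl, hvx hadj]
  obtain ⟨u, hvu, hindep⟩ := hv (N2 G v) hdisj hN2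
  have huN2 : u ∉ N2 G v := fun hu => hu.2.1 hvu
  refine ⟨u, Set.eq_singleton_iff_unique_mem.2 ⟨hvu.symm, fun x hux => ?_⟩⟩
  by_contra hxv
  have hvx : ¬G.Adj v x := fun hvx =>
    h3.closedWalk_length_ne_three (.cons hvu (.cons hux (.cons hvx.symm .nil))) rfl
  exact ((isIndep_insert huN2).1 hindep).2 x ⟨hxv, hvx, u, hvu, hux⟩ hux

end ShortCycles

section CompleteGraphs

variable {V : Type*} {G : SimpleGraph V}

theorem eq_univ_of_forall_neighborSet_subset (hG : G.Preconnected) {S : Set V}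
    (hne : S.Nonempty) (hS : ∀ x ∈ S, G.neighborSet x ⊆ S) : S = Set.univ := by
  obtain ⟨u, hu⟩ := hne
  refine Set.eq_univ_of_forall fun v => by_contra fun hv => ?_
  obtain ⟨p⟩ := hG u v
  obtain ⟨d, -, hfst, hsnd⟩ := p.exists_boundary_dart S hu hv
  exact hsnd (hS _ hfst d.adj)

theorem eq_top_and_card_eq_two_of_neighborSet_eq_singleton (hG : G.Preconnected) {u v : V}
    (hu : G.neighborSet u = {v}) (hv : G.neighborSet v = {u}) : G = ⊤ ∧ Nat.card V = 2 := by
  have huv : G.Adj u v := hu.ge rfl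
  have huniv : ({u, v} : Set V) = Set.univ := by
    refine eq_univ_of_forall_neighborSet_subset hG (Set.insert_nonempty u {v}) ?_
    rintro x (rfl | rfl)
    · simp [hu]
    · simp [hv]
  constructor
  · refine eq_top_iff.2 fun a b hab => ?_
    rcases huniv.ge (Set.mem_univ a) with rfl | rfl <;>
      rcases huniv.ge (Set.mem_univ b) with rfl | rfl
    exacts [(hab.ne rfl).elim, huv, huv.symm, (hab.ne rfl).elim]
  · rw [← Set.ncard_univ, ← huniv, Set.ncard_pair huv.ne]

theorem nonempty_iso_top_fin_iff {n : ℕ} [NeZero n] :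
    Nonempty (G ≃g (⊤ : SimpleGraph (Fin n))) ↔ G = ⊤ ∧ Nat.card V = n := by
  constructor
  · rintro ⟨e⟩
    refine ⟨eq_top_iff.2 fun a b hab => ?_, by simpa using Nat.card_congr e.toEquiv⟩
    exact e.map_adj_iff.1 (e.injective.ne hab.ne)
  · rintro ⟨rfl, hcard⟩
    have : Finite V := Nat.finite_of_card_ne_zero (hcard ▸ NeZero.ne n)
    exact ⟨Iso.completeGraph (Finite.equivFinOfCardEq hcard)⟩

theorem exists_ne_and_subset_singleton [Nontrivial V] {S₁ S₂ : Set V} (h₁ : S₁.Subsingleton)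
    (h₂ : S₂.Subsingleton) (hdisj : Disjoint S₁ S₂) : ∃ x y, x ≠ y ∧ S₁ ⊆ {x} ∧ S₂ ⊆ {y} := by
  rcases h₁.eq_empty_or_singleton with rfl | ⟨x, rfl⟩ <;>
    rcases h₂.eq_empty_or_singleton with rfl | ⟨y, rfl⟩
  · obtain ⟨x, y, hxy⟩ := exists_pair_ne V
    exact ⟨x, y, hxy, Set.empty_subset _, Set.empty_subset _⟩
  · obtain ⟨x, hxy⟩ := exists_ne y
    exact ⟨x, y, hxy, Set.empty_subset _, Set.Subset.rfl⟩
  · obtain ⟨y, hyx⟩ := exists_ne x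
    exact ⟨x, y, hyx.symm, Set.Subset.rfl, Set.empty_subset _⟩
  · exact ⟨x, y, Set.disjoint_singleton.1 hdisj, Set.Subset.rfl, Set.Subset.rfl⟩

theorem isMaxIndep_top_singleton (x : V) : IsMaxIndep (⊤ : SimpleGraph V) {x} := by
  refine ⟨Set.subset_univ _, isIndep_singleton x, fun T _ hT => ?_⟩
  rw [Set.ncard_singleton]
  have hsub := isIndep_top_iff.1 hT
  exact (Set.ncard_le_one hsub.finite).2 fun _ ha _ hb => hsub ha hb

theorem w2_top [Nontrivial V] : W2 (⊤ : SimpleGraph V) := by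
  intro S₁ S₂ _ _ h₁ h₂ hdisj
  obtain ⟨x, y, hxy, hx, hy⟩ :=
    exists_ne_and_subset_singleton (isIndep_top_iff.1 h₁) (isIndep_top_iff.1 h₂) hdisj
  exact ⟨{x}, {y}, hx, hy, isMaxIndep_top_singleton x, isMaxIndep_top_singleton y,
    Set.disjoint_singleton.2 hxy⟩

end CompleteGraphs

/-- A connected graph with no cycles of lengths 3 and 5 is in `W₂`
iff it is isomorphic to `K₂`. -/
theorem stmt2 {V : Type*} [Fintype V] (G : SimpleGraph V) (hconn : G.Connected)
    (h3 : CycleFree G 3) (h5 : CycleFree G 5) :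
    W2 G ↔ Nonempty (G ≃g (⊤ : SimpleGraph (Fin 2))) := by
  rw [nonempty_iso_top_fin_iff]
  constructor
  · intro hW2
    have hleaf (v : V) : ∃ u, G.neighborSet u = {v} :=
      (hW2.shedding v).exists_neighborSet_eq_singleton h3
        (isIndep_N2 (h3.closedWalk_length_ne_five h5))
    obtain ⟨v⟩ := hconn.nonempty
    obtain ⟨u, hu⟩ := hleaf v
    obtain ⟨w, hw⟩ := hleaf u
    have hwv : w = v := by
      have hwu : G.Adj w u := hw.ge rfl
      exact hu.le hwu.symm
    exact eq_top_and_card_eq_two_of_neighborSet_eq_singleton hconn.preconnected hu (hwv ▸ hw)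
  · rintro ⟨rfl, hcard⟩
    have : Nontrivial V := Finite.one_lt_card_iff_nontrivial.1 (by omega)
    exact w2_top
end

section
/- Let G be a graph containing no cycle of length 5 (as a subgraph), and let v ∈ V(G). Then every maximal independent set of the induced subgraph G[N2(v)] dominates N(v) ∩ N(N2(v)). -/
open SimpleGraph

/-!
By maximality, `S` dominates `N₂(v)`. Let `x ∈ N(v)` have a neighbor `y ∈ N₂(v)`. If `y ∉ S`, then
`y` has a neighbor `s ∈ S`, and `v` and `s` have a common neighbor `w`. If `w ≠ x`, then `v x y s w`
is a 5-cycle, since `v`, `N(v)` and `N₂(v)` are disjoint; hence `w = x`, and `s` is adjacent to `x`.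
-/

section

variable {V : Type*} {G : SimpleGraph V}

theorem exists_adj_of_mem_openNbhd {T : Set V} {x : V} (hx : x ∈ openNbhd G T) :
    ∃ y ∈ T, G.Adj y x :=
  hx.1.resolve_left hx.2

theorem IsIndep.insert {S : Set V} {a : V} (hS : IsIndep G S) (ha : ∀ s ∈ S, ¬ G.Adj s a) :
    IsIndep G (insert a S) :=
  Set.Pairwise.insert hS fun s hs _ => ⟨fun has => ha s hs has.symm, ha s hs⟩

theorem IsMaximalIndepOn.dominates {A S : Set V} (hS : IsMaximalIndepOn G A S) :
    Dominates G S A := by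
  obtain ⟨hSA, hindep, hmax⟩ := hS
  intro a ha
  by_contra ha_undominated
  have hnonadj : ∀ s ∈ S, ¬ G.Adj s a := fun s hs hsa => ha_undominated (.inr ⟨s, hs, hsa⟩)
  have hS_eq : S = insert a S :=
    hmax _ (Set.insert_subset ha hSA) (hindep.insert hnonadj) (Set.subset_insert a S)
  exact ha_undominated (.inl (hS_eq ▸ Set.mem_insert a S))

theorem exists_isCycle_length_eq_five {a b c d e : V} (hab : G.Adj a b) (hbc : G.Adj b c)
    (hcd : G.Adj c d) (hde : G.Adj d e) (hea : G.Adj e a) (hnodup : [a, b, c, d, e].Nodup) :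
    ∃ p : G.Walk a a, p.IsCycle ∧ p.length = 5 := by
  let path : G.Walk b a := .cons hbc (.cons hcd (.cons hde (.cons hea .nil)))
  have hpath : path.IsPath := by
    rw [Walk.isPath_def]
    exact (List.perm_append_singleton a [b, c, d, e]).nodup_iff.mpr hnodup
  refine ⟨.cons hab path, ?_, rfl⟩
  exact Walk.isCycle_iff_isPath_tail_and_le_length.mpr ⟨by simpa using hpath, by simp [path]⟩

theorem ne_of_adj_of_mem_N2 {v w u : V} (hvw : G.Adj v w) (hu : u ∈ N2 G v) : w ≠ u := by
  rintro rfl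
  exact hu.2.1 hvw

theorem adj_of_mem_N2_of_adj {v x y s : V} (h5 : ∀ p : G.Walk v v, p.IsCycle → p.length ≠ 5)
    (hvx : G.Adj v x) (hxy : G.Adj x y) (hys : G.Adj y s) (hy : y ∈ N2 G v) (hs : s ∈ N2 G v) :
    G.Adj s x := by
  obtain ⟨w, hvw, hws⟩ := hs.2.2
  by_contra hsx
  have hxw : x ≠ w := by
    rintro rfl
    exact hsx hws.symm
  have hnodup : [v, x, y, s, w].Nodup := by
    simp [hvx.ne, hy.1.symm, hs.1.symm, hvw.ne, hxy.ne, ne_of_adj_of_mem_N2 hvx hs, hxw,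
      hys.ne, (ne_of_adj_of_mem_N2 hvw hy).symm, hws.ne']
  obtain ⟨p, hp, hlen⟩ := exists_isCycle_length_eq_five hvx hxy hys hws.symm hvw.symm hnodup
  exact h5 p hp hlen

theorem stmt7_general {v : V} (h5 : ∀ p : G.Walk v v, p.IsCycle → p.length ≠ 5)
    {S : Set V} (hS : S ⊆ N2 G v) (hdom : Dominates G S (N2 G v)) :
    Dominates G S (G.neighborSet v ∩ openNbhd G (N2 G v)) := by
  rintro x ⟨hvx, hx⟩
  obtain ⟨y, hy, hyx⟩ := exists_adj_of_mem_openNbhd hx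
  rcases hdom hy with hyS | ⟨s, hs, hsy⟩
  · exact .inr ⟨y, hyS, hyx⟩
  · exact .inr ⟨s, hs, adj_of_mem_N2_of_adj h5 hvx hyx.symm hsy.symm hy (hS hs)⟩

end

/-- In a graph with no cycle of length 5, every maximal independent set of
`G[N₂(v)]` dominates `N(v) ∩ N(N₂(v))`. -/
theorem stmt7 {V : Type*} [Fintype V] (G : SimpleGraph V)
    (h5 : CycleFree G 5) (v : V) (S : Set V)
    (hS : IsMaximalIndepOn G (N2 G v) S) :
    Dominates G S (G.neighborSet v ∩ openNbhd G (N2 G v)) :=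
  stmt7_general (h5 v) hS.1 hS.dominates
end
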